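/- Let h : R^n → [0,1] be a monotone measurable function. Then every coordinate of the vector ∫ x h(x) dγ(x) ∈ R^n is nonnegative; more generally, for every z ∈ R^n and t ≥ 0, every coordinate of ∫ x h(e^{−t/2} x + z) dγ(x) is nonnegative. -/

import Mathlib

/-! Redrawing the `i`-th coordinate of `x` from its own marginal leaves a product measure unchanged,
so `∫ xᵢ h(x)` is the average over `x` of the one-dimensional integrals `∫ s g(s)`, where `g` is the
nondecreasing restriction of `h` to the line through `x` in direction `i`. Since the `i`-th marginal
has mean zero, `∫ s g(s) = ∫ s (g(s) - g(0))`, and this integrand is pointwise nonnegative. -/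

open MeasureTheory ProbabilityTheory

noncomputable section

/-- The standard Gaussian measure on `ℝⁿ`. -/
def stdGaussian (n : ℕ) : Measure (Fin n → ℝ) := Measure.pi fun _ => gaussianReal 0 1

/-- `h` is monotone: nondecreasing in each coordinate when the other coordinates are
kept fixed. -/
def CoordMonotone (n : ℕ) (h : (Fin n → ℝ) → ℝ) : Prop :=
  ∀ (x : Fin n → ℝ) (i : Fin n) (s t : ℝ), s ≤ t →
    h (Function.update x i s) ≤ h (Function.update x i t)

section ProductMeasure

variable {ι : Type*} [Fintype ι] [DecidableEq ι] {α : ι → Type*} [∀ j, MeasurableSpace (α j)]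

lemma measurePreserving_update (μ : ∀ j, Measure (α j)) [∀ j, SigmaFinite (μ j)] (i : ι)
    [IsProbabilityMeasure (μ i)] :
    MeasurePreserving (fun p : (∀ j, α j) × α i => Function.update p.1 i p.2)
      ((Measure.pi μ).prod (μ i)) (Measure.pi μ) := by
  refine ⟨measurable_update', (Measure.pi_eq fun s hs => ?_).symm⟩
  have hpre : (fun p : (∀ j, α j) × α i => Function.update p.1 i p.2) ⁻¹' Set.univ.pi s =
      Set.univ.pi (Function.update s i Set.univ) ×ˢ s i := by
    ext p
    simp only [Set.mem_preimage, Set.mem_prod, Set.mem_univ_pi]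
    rw [Function.forall_update_iff p.1 fun j y => y ∈ s j,
      Function.forall_update_iff s fun j t => p.1 j ∈ t]
    simp [and_comm]
  have hfactor (j : ι) : μ j (Function.update s i Set.univ j) =
      Function.update (fun k => μ k (s k)) i 1 j := by
    rw [Function.apply_update (fun k => μ k), measure_univ]
  rw [Measure.map_apply measurable_update' (.univ_pi hs), hpre, Measure.prod_prod, Measure.pi_pi]
  simp only [hfactor]
  rw [Finset.prod_update_of_mem (Finset.mem_univ i), one_mul, mul_comm,
    ← Finset.erase_eq, Finset.mul_prod_erase _ (fun k => μ k (s k)) (Finset.mem_univ i)]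

lemma integral_pi_eq_integral_integral_update {E : Type*} [NormedAddCommGroup E]
    [NormedSpace ℝ E] {μ : ∀ j, Measure (α j)} [∀ j, SigmaFinite (μ j)] (i : ι)
    [IsProbabilityMeasure (μ i)] {f : (∀ j, α j) → E} (hf : Integrable f (Measure.pi μ)) :
    ∫ x, f x ∂Measure.pi μ = ∫ x, ∫ s, f (Function.update x i s) ∂μ i ∂Measure.pi μ := by
  have hmp := measurePreserving_update μ i
  calc ∫ x, f x ∂Measure.pi μ
      = ∫ p, f (Function.update p.1 i p.2) ∂(Measure.pi μ).prod (μ i) := by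
        rw [← integral_map hmp.aemeasurable (hmp.map_eq.symm ▸ hf.aestronglyMeasurable),
          hmp.map_eq]
    _ = ∫ x, ∫ s, f (Function.update x i s) ∂μ i ∂Measure.pi μ :=
        integral_prod _ (hmp.integrable_comp_of_integrable hf)

end ProductMeasure

lemma integral_id_mul_nonneg_of_monotone {μ : Measure ℝ} (hid : Integrable (fun s => s) μ)
    (hmean : ∫ s, s ∂μ = 0) {g : ℝ → ℝ} (hg : Monotone g)
    (hint : Integrable (fun s => s * g s) μ) : 0 ≤ ∫ s, s * g s ∂μ := by
  have hpointwise (s : ℝ) : 0 ≤ s * (g s - g 0) := by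
    simpa using (monotone_id.monovary hg).sub_mul_sub_nonneg 0 s
  calc 0 ≤ ∫ s, s * (g s - g 0) ∂μ := integral_nonneg hpointwise
    _ = ∫ s, s * g s ∂μ - (∫ s, s ∂μ) * g 0 := by
        simp only [mul_sub]
        rw [integral_sub hint (hid.mul_const _), integral_mul_const]
    _ = ∫ s, s * g s ∂μ := by rw [hmean, zero_mul, sub_zero]

theorem monotone_first_moment_nonneg_general {ι : Type*} [Fintype ι] [DecidableEq ι]
    {μ : ι → Measure ℝ} [∀ j, SigmaFinite (μ j)] {i : ι} [IsProbabilityMeasure (μ i)]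
    (hid : Integrable (fun s => s) (μ i)) (hmean : ∫ s, s ∂μ i = 0) {h : (ι → ℝ) → ℝ}
    (hint : Integrable (fun x => x i * h x) (Measure.pi μ))
    (hmono : ∀ x, Monotone fun s => h (Function.update x i s)) :
    0 ≤ ∫ x, x i * h x ∂Measure.pi μ := by
  have hline : ∀ᵐ x ∂Measure.pi μ,
      Integrable (fun s => s * h (Function.update x i s)) (μ i) := by
    simpa using
      ((measurePreserving_update μ i).integrable_comp_of_integrable hint).prod_right_ae
  rw [integral_pi_eq_integral_integral_update i hint]
  simp only [Function.update_self]
  refine integral_nonneg_of_ae ?_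
  filter_upwards [hline] with x hx
  exact integral_id_mul_nonneg_of_monotone hid hmean (hmono x) hx

lemma CoordMonotone.comp_coordwise {n : ℕ} {h : (Fin n → ℝ) → ℝ} (hmono : CoordMonotone n h)
    {φ : Fin n → ℝ → ℝ} (hφ : ∀ j, Monotone (φ j)) :
    CoordMonotone n fun x => h fun j => φ j (x j) := by
  intro x i s t hst
  simp only [Function.apply_update φ]
  exact hmono _ i _ _ (hφ i hst)

lemma integral_eval_mul_stdGaussian_nonneg {n : ℕ} {h : (Fin n → ℝ) → ℝ} (hmeas : Measurable h)
    {C : ℝ} (hbound : ∀ x, ‖h x‖ ≤ C) (hmono : CoordMonotone n h) (i : Fin n) :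
    0 ≤ ∫ x, x i * h x ∂stdGaussian n := by
  have hid : Integrable (fun s => s) (gaussianReal 0 1) :=
    (memLp_id_gaussianReal 1).integrable le_rfl
  have hint : Integrable (fun x => x i * h x) (stdGaussian n) :=
    (integrable_eval (μ := fun _ => gaussianReal 0 1) hid).mul_bdd hmeas.aestronglyMeasurable
      (ae_of_all _ hbound)
  exact monotone_first_moment_nonneg_general (μ := fun _ => gaussianReal 0 1) hid
    integral_id_gaussianReal hint fun x _ _ => hmono x i _ _

/-- **Fact 2.1.** For a monotone measurable `h : ℝⁿ → [0,1]`, every coordinate of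
`∫ x h(x) dγ(x)` is nonnegative; more generally, for every `z ∈ ℝⁿ` and `t ≥ 0`, every
coordinate of `∫ x h(e^{-t/2} x + z) dγ(x)` is nonnegative. -/
theorem monotone_first_moment_nonneg (n : ℕ) (h : (Fin n → ℝ) → ℝ)
    (hmeas : Measurable h) (hrange : ∀ x, h x ∈ Set.Icc (0 : ℝ) 1)
    (hmono : CoordMonotone n h) :
    (∀ i, 0 ≤ ∫ x, x i * h x ∂stdGaussian n) ∧
    (∀ (z : Fin n → ℝ) (t : ℝ), 0 ≤ t → ∀ i,
      0 ≤ ∫ x, x i * h (fun j => Real.exp (-t / 2) * x j + z j) ∂stdGaussian n) := by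
  have hbound (x : Fin n → ℝ) : ‖h x‖ ≤ 1 := by
    rw [Real.norm_of_nonneg (hrange x).1]
    exact (hrange x).2
  refine ⟨integral_eval_mul_stdGaussian_nonneg hmeas hbound hmono, fun z t _ => ?_⟩
  have hscale (j : Fin n) : Monotone fun s => Real.exp (-t / 2) * s + z j :=
    (monotone_mul_left_of_nonneg (Real.exp_pos _).le).add_const _
  exact integral_eval_mul_stdGaussian_nonneg (hmeas.comp (by fun_prop)) (fun _ => hbound _)
    (hmono.comp_coordwise hscale)

end
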